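/- arXiv:2109.04048 — 7 statements merged into one kernel-verified Lean document; each statement's English description precedes it below -/
import Mathlib

section
/- Let x : ℕ × ℕ → ℝ be of the form x(n,m) = Σ_{k=1}^{K} p_k(n,m) · ρ_{1k}^n · ρ_{2k}^m · cos(2π(ω_{1k} n + ω_{2k} m) + φ_k), where each p_k is a real polynomial in two variables, each ρ_{1k}, ρ_{2k} > 0, and ω_{1k}, ω_{2k}, φ_k ∈ ℝ. Then there exists r ∈ ℕ such that for all array sizes (N₁, N₂) and all window sizes (L₁, L₂) with 1 ≤ Lᵢ ≤ Nᵢ, the rank of the Hankel-block-Hankel trajectory matrix of x does not exceed r (i.e., x is a 2D array of finite rank). -/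
/-!
Call `f : ℕ × ℕ → ℝ` *separable* (`IsShiftSeparable`) if `f (a + b) = ∑ i, u i a * v i b` for a finite family of
functions `u i`, `v i`. Such a decomposition factors every trajectory matrix of `f` through `ℝ^ι`,
so its rank is at most the number of summands, whatever the array and window sizes
(`rank_trajectoryMatrix2D_le`).

Separable functions form a subalgebra (`separableSubalgebra`): decompositions are concatenated for
sums and tensored for products. It contains the coordinate functions, hence all polynomials, the
exponentials `ρ ^ n`, and, by the addition formula for the cosine, all sinusoids. An array of the
given form is therefore separable.
-/

/-- The Hankel-block-Hankel trajectory matrix of a 2D array `x`,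
with window sizes `(L₁, L₂)` and `Kᵢ = Nᵢ - Lᵢ + 1` column-block sizes:
`W[(i₁,i₂),(k₁,k₂)] = x (i₁ + k₁, i₂ + k₂)`. -/
def trajectoryMatrix2D (x : ℕ × ℕ → ℝ) (L₁ L₂ K₁ K₂ : ℕ) :
    Matrix (Fin L₁ × Fin L₂) (Fin K₁ × Fin K₂) ℝ :=
  Matrix.of fun i k => x ((i.1 : ℕ) + (k.1 : ℕ), (i.2 : ℕ) + (k.2 : ℕ))

/-- `f (a + b)` is a finite sum of products of a function of `a` and a function of `b`. -/
def IsShiftSeparable (f : ℕ × ℕ → ℝ) : Prop :=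
  ∃ (ι : Type) (_ : Fintype ι) (u v : ι → ℕ × ℕ → ℝ), ∀ a b, f (a + b) = ∑ i, u i a * v i b

lemma IsShiftSeparable.add {f g : ℕ × ℕ → ℝ} (hf : IsShiftSeparable f) (hg : IsShiftSeparable g) :
    IsShiftSeparable (f + g) := by
  obtain ⟨ι, _, u, v, h⟩ := hf
  obtain ⟨κ, _, s, t, h'⟩ := hg
  refine ⟨ι ⊕ κ, inferInstance, Sum.elim u s, Sum.elim v t, fun a b => ?_⟩
  simp [h, h']

lemma IsShiftSeparable.mul {f g : ℕ × ℕ → ℝ} (hf : IsShiftSeparable f) (hg : IsShiftSeparable g) :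
    IsShiftSeparable (f * g) := by
  obtain ⟨ι, _, u, v, h⟩ := hf
  obtain ⟨κ, _, s, t, h'⟩ := hg
  refine ⟨ι × κ, inferInstance, fun i => u i.1 * s i.2, fun i => v i.1 * t i.2, fun a b => ?_⟩
  simp only [Pi.mul_apply, h, h', Fintype.sum_mul_sum, Fintype.sum_prod_type]
  exact Finset.sum_congr rfl fun i _ => Finset.sum_congr rfl fun j _ => by ring

lemma isShiftSeparable_const (c : ℝ) : IsShiftSeparable fun _ => c :=
  ⟨Unit, inferInstance, fun _ _ => c, fun _ _ => 1, fun a b => by simp⟩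

/-- The separable functions, as a subalgebra of all functions `ℕ × ℕ → ℝ`. -/
def separableSubalgebra : Subalgebra ℝ (ℕ × ℕ → ℝ) where
  carrier := {f | IsShiftSeparable f}
  add_mem' := IsShiftSeparable.add
  mul_mem' := IsShiftSeparable.mul
  algebraMap_mem' := isShiftSeparable_const

lemma isShiftSeparable_of_additive (f : ℕ × ℕ → ℝ) (h : ∀ a b, f (a + b) = f a + f b) :
    IsShiftSeparable f :=
  ⟨Fin 2, inferInstance, ![f, 1], ![1, f], fun a b => by simp [h]⟩

lemma isShiftSeparable_of_multiplicative (f : ℕ × ℕ → ℝ) (h : ∀ a b, f (a + b) = f a * f b) :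
    IsShiftSeparable f :=
  ⟨Unit, inferInstance, fun _ => f, fun _ => f, fun a b => by simp [h]⟩

lemma isShiftSeparable_cos (α β φ : ℝ) :
    IsShiftSeparable fun a => Real.cos (2 * Real.pi * (α * a.1 + β * a.2) + φ) := by
  refine ⟨Fin 2, inferInstance,
    ![fun a => Real.cos (2 * Real.pi * (α * a.1 + β * a.2) + φ),
      fun a => -Real.sin (2 * Real.pi * (α * a.1 + β * a.2) + φ)],
    ![fun b => Real.cos (2 * Real.pi * (α * b.1 + β * b.2)),
      fun b => Real.sin (2 * Real.pi * (α * b.1 + β * b.2))], fun a b => ?_⟩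
  have e : 2 * Real.pi * (α * ((a + b).1 : ℕ) + β * ((a + b).2 : ℕ)) + φ =
      (2 * Real.pi * (α * a.1 + β * a.2) + φ) + 2 * Real.pi * (α * b.1 + β * b.2) := by
    simp only [Prod.fst_add, Prod.snd_add, Nat.cast_add]
    ring
  simp only [e, Real.cos_add _ (2 * Real.pi * (α * b.1 + β * b.2)), Fin.sum_univ_two,
    Matrix.cons_val_zero, Matrix.cons_val_one]
  ring

lemma isShiftSeparable_eval (p : MvPolynomial (Fin 2) ℝ) :
    IsShiftSeparable fun a => MvPolynomial.eval ![(a.1 : ℝ), (a.2 : ℝ)] p := by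
  induction p using MvPolynomial.induction_on with
  | C c => simpa using isShiftSeparable_const c
  | add p q hp hq => simpa [Pi.add_def] using hp.add hq
  | mul_X p i hp =>
    have hX : IsShiftSeparable fun a => (![(a.1 : ℝ), (a.2 : ℝ)] : Fin 2 → ℝ) i := by
      apply isShiftSeparable_of_additive
      intro a b
      fin_cases i <;> simp
    simpa [Pi.mul_def] using hp.mul hX

/-- A decomposition of `x` indexed by `ι` writes each trajectory matrix as a product with inner
index type `ι`. -/
lemma rank_trajectoryMatrix2D_le {ι : Type} [Fintype ι] {x : ℕ × ℕ → ℝ} {u v : ι → ℕ × ℕ → ℝ}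
    (h : ∀ a b, x (a + b) = ∑ i, u i a * v i b) (L₁ L₂ K₁ K₂ : ℕ) :
    (trajectoryMatrix2D x L₁ L₂ K₁ K₂).rank ≤ Fintype.card ι := by
  have e : trajectoryMatrix2D x L₁ L₂ K₁ K₂ =
      (Matrix.of fun (a : Fin L₁ × Fin L₂) i => u i (a.1, a.2)) *
        (Matrix.of fun i (b : Fin K₁ × Fin K₂) => v i (b.1, b.2)) := by
    ext a b
    simpa [trajectoryMatrix2D, Matrix.mul_apply] using h (a.1, a.2) (b.1, b.2)
  rw [e]
  exact (Matrix.rank_mul_le_left _ _).trans (Matrix.rank_le_card_width _)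

/-- A 2D array of the form
`x(n,m) = Σ_k p_k(n,m) · ρ₁ₖ^n · ρ₂ₖ^m · cos(2π(ω₁ₖ n + ω₂ₖ m) + φₖ)`
is of finite rank: all of its trajectory matrices have uniformly bounded rank. -/
theorem finite_rank_of_poly_modulated_sinusoid_sum
    (K : ℕ) (p : Fin K → MvPolynomial (Fin 2) ℝ)
    (ρ₁ ρ₂ ω₁ ω₂ φ : Fin K → ℝ)
    (hρ₁ : ∀ k, 0 < ρ₁ k) (hρ₂ : ∀ k, 0 < ρ₂ k)
    (x : ℕ × ℕ → ℝ)
    (hx : ∀ n m : ℕ, x (n, m) =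
      ∑ k : Fin K, MvPolynomial.eval ![(n : ℝ), (m : ℝ)] (p k) *
        ρ₁ k ^ n * ρ₂ k ^ m *
        Real.cos (2 * Real.pi * (ω₁ k * n + ω₂ k * m) + φ k)) :
    ∃ r : ℕ, ∀ N₁ N₂ L₁ L₂ : ℕ, 1 ≤ L₁ → L₁ ≤ N₁ → 1 ≤ L₂ → L₂ ≤ N₂ →
      (trajectoryMatrix2D x L₁ L₂ (N₁ - L₁ + 1) (N₂ - L₂ + 1)).rank ≤ r := by
  have hs : IsShiftSeparable x := by
    have e : x = ∑ k : Fin K, (fun a : ℕ × ℕ => MvPolynomial.eval ![(a.1 : ℝ), (a.2 : ℝ)] (p k)) *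
        (fun a => ρ₁ k ^ a.1) * (fun a => ρ₂ k ^ a.2) *
        (fun a => Real.cos (2 * Real.pi * (ω₁ k * a.1 + ω₂ k * a.2) + φ k)) := by
      ext ⟨n, m⟩
      simp [hx]
    rw [e]
    refine Subalgebra.sum_mem separableSubalgebra fun k _ => ?_
    exact (((isShiftSeparable_eval (p k)).mul
      (isShiftSeparable_of_multiplicative _ fun a b => pow_add _ _ _)).mul
      (isShiftSeparable_of_multiplicative _ fun a b => pow_add _ _ _)).mul
      (isShiftSeparable_cos _ _ _)
  obtain ⟨ι, _, u, v, h⟩ := hs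
  exact ⟨Fintype.card ι, fun N₁ N₂ L₁ L₂ _ _ _ _ => rank_trajectoryMatrix2D_le h _ _ _ _⟩
end

section
/- Let x : ℕ × ℕ → ℝ be of the form x(m,n) = Σ_{k=1}^{K} s_k · ρ_{1k}^m · ρ_{2k}^n · cos(2π(ω_{1k} m + ω_{2k} n) + φ_k) with s_k ∈ ℝ, ρ_{1k}, ρ_{2k} > 0, and ω_{1k}, ω_{2k}, φ_k ∈ ℝ (the 2D-ESPRIT signal model, i.e., Theorem 1 with constant polynomials p_k). Then for all array sizes (N₁, N₂) and all window sizes (L₁, L₂) with 1 ≤ Lᵢ ≤ Nᵢ, the rank of the Hankel-block-Hankel trajectory matrix of x is at most 2K. -/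
/-- A 2D-ESPRIT model signal
`x(m,n) = Σ_k s_k · ρ₁ₖ^m · ρ₂ₖ^n · cos(2π(ω₁ₖ m + ω₂ₖ n) + φₖ)`
has all trajectory matrices of rank at most `2K`. -/
theorem esprit_signal_rank_le_two_mul
    (K : ℕ) (s ρ₁ ρ₂ ω₁ ω₂ φ : Fin K → ℝ)
    (hρ₁ : ∀ k, 0 < ρ₁ k) (hρ₂ : ∀ k, 0 < ρ₂ k)
    (x : ℕ × ℕ → ℝ)
    (hx : ∀ m n : ℕ, x (m, n) =
      ∑ k : Fin K, s k * ρ₁ k ^ m * ρ₂ k ^ n *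
        Real.cos (2 * Real.pi * (ω₁ k * m + ω₂ k * n) + φ k)) :
    ∀ N₁ N₂ L₁ L₂ : ℕ, 1 ≤ L₁ → L₁ ≤ N₁ → 1 ≤ L₂ → L₂ ≤ N₂ →
      (trajectoryMatrix2D x L₁ L₂ (N₁ - L₁ + 1) (N₂ - L₂ + 1)).rank ≤ 2 * K := by
  intro N₁ N₂ L₁ L₂ _ _ _ _
  -- The inner index `Fin K ⊕ Fin K` separates the cosine terms from the sine terms.
  let A : Matrix (Fin L₁ × Fin L₂) (Fin K ⊕ Fin K) ℝ := Matrix.of fun i =>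
    Sum.elim
      (fun k => s k * ρ₁ k ^ (i.1 : ℕ) * ρ₂ k ^ (i.2 : ℕ) *
        Real.cos (2 * Real.pi * (ω₁ k * (i.1 : ℕ) + ω₂ k * (i.2 : ℕ))))
      (fun k => -(s k * ρ₁ k ^ (i.1 : ℕ) * ρ₂ k ^ (i.2 : ℕ) *
        Real.sin (2 * Real.pi * (ω₁ k * (i.1 : ℕ) + ω₂ k * (i.2 : ℕ)))))
  let B : Matrix (Fin K ⊕ Fin K) (Fin (N₁ - L₁ + 1) × Fin (N₂ - L₂ + 1)) ℝ :=
    Matrix.of fun r j => Sum.elim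
      (fun k => ρ₁ k ^ (j.1 : ℕ) * ρ₂ k ^ (j.2 : ℕ) *
        Real.cos (2 * Real.pi * (ω₁ k * (j.1 : ℕ) + ω₂ k * (j.2 : ℕ)) + φ k))
      (fun k => ρ₁ k ^ (j.1 : ℕ) * ρ₂ k ^ (j.2 : ℕ) *
        Real.sin (2 * Real.pi * (ω₁ k * (j.1 : ℕ) + ω₂ k * (j.2 : ℕ)) + φ k)) r
  have hAB : trajectoryMatrix2D x L₁ L₂ (N₁ - L₁ + 1) (N₂ - L₂ + 1) = A * B := by
    ext i j
    simp only [trajectoryMatrix2D, Matrix.of_apply, hx, Matrix.mul_apply, Fintype.sum_sum_type,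
      A, B, Sum.elim_inl, Sum.elim_inr]
    rw [← Finset.sum_add_distrib]
    refine Finset.sum_congr rfl fun k _ => ?_
    have hθ : 2 * Real.pi * (ω₁ k * (((i.1 : ℕ) + (j.1 : ℕ) : ℕ) : ℝ)
          + ω₂ k * (((i.2 : ℕ) + (j.2 : ℕ) : ℕ) : ℝ)) + φ k
        = 2 * Real.pi * (ω₁ k * (i.1 : ℕ) + ω₂ k * (i.2 : ℕ))
          + (2 * Real.pi * (ω₁ k * (j.1 : ℕ) + ω₂ k * (j.2 : ℕ)) + φ k) := by
      push_cast
      ring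
    rw [hθ, Real.cos_add, pow_add, pow_add]
    ring
  calc (trajectoryMatrix2D x L₁ L₂ (N₁ - L₁ + 1) (N₂ - L₂ + 1)).rank
      = (A * B).rank := by rw [hAB]
    _ ≤ A.rank := Matrix.rank_mul_le_left A B
    _ ≤ Fintype.card (Fin K ⊕ Fin K) := A.rank_le_card_width
    _ = 2 * K := by rw [Fintype.card_sum, Fintype.card_fin, two_mul]
end

section
/- Let x : ℕ → ℝ be given by x(n) = s · ρ^n · cos(2πωn + φ) with s ≠ 0, ρ > 0, and 0 < ω < 1/2. Then for all N and all window lengths L with 2 ≤ L ≤ N and K = N − L + 1 ≥ 2, the L × K trajectory matrix of x has rank exactly 2. -/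
/-!
By the angle-addition formula the trajectory matrix factors through `ℝ²`, so its rank is at most
two. Its leading `2 × 2` minor is `x 0 * x 2 - x 1 ^ 2 = -(s ρ sin (2πω))²`, which is nonzero because
`0 < 2πω < π`, so its rank is at least two.
-/

/-- The `L × K` Hankel trajectory matrix of a sequence `x`:
`H[i,j] = x (i + j)`. -/
def trajectoryMatrix1D (x : ℕ → ℝ) (L K : ℕ) : Matrix (Fin L) (Fin K) ℝ :=
  Matrix.of fun i j => x ((i : ℕ) + (j : ℕ))

/-- An exponentially modulated sinusoid `x(n) = s · ρⁿ · cos(2πωn + φ)` with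
`s ≠ 0`, `ρ > 0`, `0 < ω < 1/2` has all trajectory matrices (with `L, K ≥ 2`)
of rank exactly 2. -/
theorem damped_sinusoid_trajectory_rank_eq_two
    (s ρ ω φ : ℝ) (hs : s ≠ 0) (hρ : 0 < ρ) (hω₀ : 0 < ω) (hω₁ : ω < 1 / 2)
    (x : ℕ → ℝ)
    (hx : ∀ n : ℕ, x n = s * ρ ^ n * Real.cos (2 * Real.pi * ω * n + φ)) :
    ∀ N L : ℕ, 2 ≤ L → L ≤ N → 2 ≤ N - L + 1 →
      (trajectoryMatrix1D x L (N - L + 1)).rank = 2 := by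
  intro N L hL _ hK
  generalize N - L + 1 = K at hK ⊢
  apply le_antisymm
  · have hfac : trajectoryMatrix1D x L K =
        (Matrix.of fun (i : Fin L) (k : Fin 2) =>
          ![ρ ^ (i : ℕ) * Real.cos (2 * Real.pi * ω * (i : ℕ)),
            ρ ^ (i : ℕ) * Real.sin (2 * Real.pi * ω * (i : ℕ))] k) *
        (Matrix.of fun (k : Fin 2) (j : Fin K) =>
          ![s * ρ ^ (j : ℕ) * Real.cos (2 * Real.pi * ω * (j : ℕ) + φ),
            -(s * ρ ^ (j : ℕ) * Real.sin (2 * Real.pi * ω * (j : ℕ) + φ))] k) := by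
      ext i j
      have harg : 2 * Real.pi * ω * ((i : ℕ) + (j : ℕ) : ℝ) + φ =
          2 * Real.pi * ω * (i : ℕ) + (2 * Real.pi * ω * (j : ℕ) + φ) := by ring
      simp only [trajectoryMatrix1D, Matrix.of_apply, Matrix.mul_apply, Fin.sum_univ_two,
        Matrix.cons_val_zero, Matrix.cons_val_one, hx, Nat.cast_add]
      rw [harg, Real.cos_add (2 * Real.pi * ω * (i : ℕ)) (_ + φ)]
      ring
    rw [hfac]
    exact (Matrix.rank_mul_le_left _ _).trans (Matrix.rank_le_width _)
  · have hsin : Real.sin (2 * Real.pi * ω) ≠ 0 := by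
      have hπ := Real.pi_pos
      exact (Real.sin_pos_of_pos_of_lt_pi (by positivity) (by nlinarith)).ne'
    set M := (trajectoryMatrix1D x L K).submatrix (Fin.castLE hL) (Fin.castLE hK) with hM
    have hdet : M.det = -(s * ρ * Real.sin (2 * Real.pi * ω)) ^ 2 := by
      -- Centring all three angles at `2πω + φ` gives `cos (α - β) cos (α + β) = cos² α - sin² β`.
      have h2 : 2 * Real.pi * ω * 2 + φ = 2 * Real.pi * ω + (2 * Real.pi * ω + φ) := by ring
      have h0 : Real.cos φ = Real.cos ((2 * Real.pi * ω + φ) - 2 * Real.pi * ω) := by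
        congr 1; ring
      have hd : M.det = x 0 * x 2 - x 1 * x 1 := by
        rw [Matrix.det_fin_two]; simp [hM, trajectoryMatrix1D]
      rw [hd, hx, hx, hx]
      push_cast
      rw [h2, mul_zero, zero_add, mul_one, h0, Real.cos_sub, Real.cos_add (2 * Real.pi * ω) (_ + _)]
      have e1 := Real.sin_sq_add_cos_sq (2 * Real.pi * ω)
      have e2 := Real.sin_sq_add_cos_sq (2 * Real.pi * ω + φ)
      generalize Real.cos (2 * Real.pi * ω + φ) = a at *
      generalize Real.sin (2 * Real.pi * ω + φ) = b at *
      generalize Real.cos (2 * Real.pi * ω) = c at *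
      generalize Real.sin (2 * Real.pi * ω) = d at *
      linear_combination s ^ 2 * ρ ^ 2 * (a ^ 2 * e1 - d ^ 2 * e2)
    have hunit : IsUnit M := by
      rw [Matrix.isUnit_iff_isUnit_det, hdet, isUnit_iff_ne_zero]
      exact neg_ne_zero.mpr (pow_ne_zero 2 (mul_ne_zero (mul_ne_zero hs hρ.ne') hsin))
    calc 2 = M.rank := by rw [Matrix.rank_of_isUnit M hunit, Fintype.card_fin]
      _ ≤ _ := Matrix.rank_submatrix_le _ _ _
end

section
/- Let p be a real polynomial of degree d and let x : ℕ → ℝ be given by x(n) = p(n). Then for all N and all window lengths L with d + 1 ≤ L ≤ N and K = N − L + 1 ≥ d + 1, the L × K trajectory matrix of x has rank exactly d + 1. -/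
open Polynomial in
/-- The matrix of the bilinear form expressing `p (s + t)` in the monomials `s ^ k * t ^ l`
with `k, l ≤ d`, for `p` of degree at most `d`. -/
def taylorCoeffMatrix (d : ℕ) (p : ℝ[X]) : Matrix (Fin (d + 1)) (Fin (d + 1)) ℝ :=
  Matrix.of fun k l => (((k : ℕ) + l).choose k : ℝ) * p.coeff (k + l)

/-- The `n × (d + 1)` matrix of powers `i ^ k` at the integer nodes `0, …, n - 1`. -/
def powerMatrix (n d : ℕ) : Matrix (Fin n) (Fin (d + 1)) ℝ :=
  Matrix.of fun i k => ((i : ℕ) : ℝ) ^ (k : ℕ)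

open Polynomial in
theorem eval_add_eq_sum_taylorCoeffMatrix (d : ℕ) (p : ℝ[X]) (hp : p.natDegree ≤ d) (s t : ℝ) :
    p.eval (s + t) =
      ∑ l : Fin (d + 1), (∑ k : Fin (d + 1), s ^ (k : ℕ) * taylorCoeffMatrix d p k l) *
        t ^ (l : ℕ) := by
  rw [← taylor_eval, eval_eq_sum_range' (n := d + 1) (by rw [natDegree_taylor]; omega),
    ← Fin.sum_univ_eq_sum_range (fun k => (taylor t p).coeff k * s ^ k) (d + 1)]
  simp_rw [Finset.sum_mul]
  rw [Finset.sum_comm]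
  refine Finset.sum_congr rfl fun k _ => ?_
  have hk : (hasseDeriv (k : ℕ) p).natDegree < d + 1 := by
    have := natDegree_hasseDeriv_le p (k : ℕ)
    omega
  rw [taylor_coeff, eval_eq_sum_range' hk,
    ← Fin.sum_univ_eq_sum_range (fun l => (hasseDeriv (k : ℕ) p).coeff l * t ^ l) (d + 1),
    Finset.sum_mul]
  refine Finset.sum_congr rfl fun l _ => ?_
  rw [hasseDeriv_coeff, taylorCoeffMatrix, Matrix.of_apply, add_comm (l : ℕ) (k : ℕ)]
  ring

open Polynomial in
theorem trajectoryMatrix1D_eq_mul (d : ℕ) (p : ℝ[X]) (hp : p.natDegree ≤ d) (x : ℕ → ℝ)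
    (hx : ∀ n : ℕ, x n = p.eval (n : ℝ)) (L K : ℕ) :
    trajectoryMatrix1D x L K =
      powerMatrix L d * taylorCoeffMatrix d p * (powerMatrix K d).transpose := by
  ext i j
  rw [trajectoryMatrix1D, Matrix.of_apply, hx, Nat.cast_add,
    eval_add_eq_sum_taylorCoeffMatrix d p hp]
  simp [Matrix.mul_apply, powerMatrix]

open Polynomial in
theorem det_taylorCoeffMatrix_ne_zero (d : ℕ) (p : ℝ[X]) (hp : p.natDegree ≤ d)
    (hd : p.coeff d ≠ 0) : (taylorCoeffMatrix d p).det ≠ 0 := by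
  have htri : ((taylorCoeffMatrix d p).submatrix id Fin.revPerm).IsUpperTriangular := by
    intro k l hkl
    have hlt : (l : ℕ) < k := hkl
    have hl := l.2
    simp only [taylorCoeffMatrix, Matrix.submatrix_apply, Matrix.of_apply, id,
      Fin.revPerm_apply, Fin.val_rev]
    rw [coeff_eq_zero_of_natDegree_lt (by omega), mul_zero]
  have hdet : ((taylorCoeffMatrix d p).submatrix id Fin.revPerm).det ≠ 0 := by
    rw [Matrix.det_of_isUpperTriangular htri, Finset.prod_ne_zero_iff]
    intro k _
    have hk := k.2
    have hsum : (k : ℕ) + (d + 1 - (k + 1)) = d := by omega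
    simp only [taylorCoeffMatrix, Matrix.submatrix_apply, Matrix.of_apply, id,
      Fin.revPerm_apply, Fin.val_rev, hsum]
    exact mul_ne_zero (Nat.cast_ne_zero.mpr (Nat.choose_pos (by omega)).ne') hd
  rw [Matrix.det_permute'] at hdet
  exact right_ne_zero_of_mul hdet

theorem det_powerMatrix_ne_zero (d : ℕ) : (powerMatrix (d + 1) d).det ≠ 0 := by
  have h : powerMatrix (d + 1) d = Matrix.vandermonde fun i : Fin (d + 1) => ((i : ℕ) : ℝ) := rfl
  rw [h, Matrix.det_vandermonde_ne_zero_iff]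
  exact Nat.cast_injective.comp Fin.val_injective

/-- A polynomial sequence `x(n) = p(n)` with `deg p = d` has all trajectory
matrices (with `L, K ≥ d + 1`) of rank exactly `d + 1`. -/
theorem polynomial_trajectory_rank_eq_degree_succ
    (d : ℕ) (p : Polynomial ℝ) (hp : p.degree = (d : ℕ))
    (x : ℕ → ℝ) (hx : ∀ n : ℕ, x n = p.eval (n : ℝ)) :
    ∀ N L : ℕ, d + 1 ≤ L → L ≤ N → d + 1 ≤ N - L + 1 →
      (trajectoryMatrix1D x L (N - L + 1)).rank = d + 1 := by
  intro N L hL _ hK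
  have hnat : p.natDegree ≤ d := (Polynomial.natDegree_eq_of_degree_eq_some hp).le
  have hcoeff : p.coeff d ≠ 0 := Polynomial.coeff_ne_zero_of_eq_degree hp
  apply le_antisymm
  · rw [trajectoryMatrix1D_eq_mul d p hnat x hx]
    refine (Matrix.rank_mul_le_left _ _).trans ((Matrix.rank_le_card_width _).trans ?_)
    simp
  · have hblock : (trajectoryMatrix1D x L (N - L + 1)).submatrix (Fin.castLE hL) (Fin.castLE hK) =
        trajectoryMatrix1D x (d + 1) (d + 1) := rfl
    have hdet : (trajectoryMatrix1D x (d + 1) (d + 1)).det ≠ 0 := by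
      rw [trajectoryMatrix1D_eq_mul d p hnat x hx, Matrix.det_mul, Matrix.det_mul,
        Matrix.det_transpose]
      exact mul_ne_zero (mul_ne_zero (det_powerMatrix_ne_zero d)
        (det_taylorCoeffMatrix_ne_zero d p hnat hcoeff)) (det_powerMatrix_ne_zero d)
    have hrank : (trajectoryMatrix1D x (d + 1) (d + 1)).rank = d + 1 := by
      rw [Matrix.rank_of_isUnit _ ((Matrix.isUnit_iff_isUnit_det _).mpr hdet.isUnit),
        Fintype.card_fin]
    rw [← hrank, ← hblock]
    exact Matrix.rank_submatrix_le _ _ _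
end

section
/- Let z₁, …, z_K ∈ ℂ be pairwise distinct and nonzero, let L ≥ K + 1, and let Z ∈ ℂ^{L×K} be the Vandermonde matrix Z[i,k] = z_k^i (0 ≤ i ≤ L−1). Let M ∈ ℂ^{L×K} be any matrix whose column space equals the column space of Z. Let M↑ ∈ ℂ^{(L−1)×K} be M with its last row deleted and M↓ ∈ ℂ^{(L−1)×K} be M with its first row deleted. Then M↑ has rank K, there exists a unique Ψ ∈ ℂ^{K×K} with M↓ = M↑ · Ψ, and the multiset of eigenvalues of Ψ is exactly {z₁, …, z_K}. -/
/-!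
Write `Z↑`, `Z↓` for the Vandermonde matrix `Z` without its last, respectively first, row, and
`D = diag(z)`. Shifting powers gives `Z↓ = Z↑ D`. Equality of column spaces gives square matrices
`T`, `S` with `M = Z T` and `Z = M S`. Since `Z↑` has at least `K` rows, its first `K` rows form an
invertible square Vandermonde matrix, so `Z↑` has a left inverse `W`
(`exists_leftInverse_vandermonde`). Cancelling `Z↑` in `Z↑ T S = Z↑` shows `S = T⁻¹`. Hence `S W`
is a left inverse of `M↑ = Z↑ T`, which gives the rank and the uniqueness of `Ψ`, while
`M↓ = Z↑ D T = M↑ (S D T)` identifies `Ψ = T⁻¹ D T`, a matrix similar to `D`.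
-/

open Matrix in
/-- A Vandermonde matrix with distinct nodes and at least as many rows as columns has a left
inverse: invert its top square block. -/
lemma exists_leftInverse_vandermonde {K n : ℕ} (h : K ≤ n) (z : Fin K → ℂ)
    (hz : Function.Injective z) :
    ∃ W : Matrix (Fin K) (Fin n) ℂ,
      W * (Matrix.of fun (i : Fin n) (k : Fin K) => z k ^ (i : ℕ)) = 1 := by
  have hdet : IsUnit ((vandermonde z)ᵀ).det := by
    rw [det_transpose]
    exact (det_vandermonde_ne_zero_iff.2 hz).isUnit
  -- The `submatrix` factor selects the first `K` rows.
  refine ⟨((vandermonde z)ᵀ)⁻¹ * (1 : Matrix (Fin n) (Fin n) ℂ).submatrix (Fin.castLE h) id, ?_⟩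
  have hsel : (1 : Matrix (Fin n) (Fin n) ℂ).submatrix (Fin.castLE h) id *
      (Matrix.of fun (i : Fin n) (k : Fin K) => z k ^ (i : ℕ)) = (vandermonde z)ᵀ := by
    ext i k
    simp [Matrix.mul_apply, Matrix.one_apply, vandermonde_apply]
  rw [Matrix.mul_assoc, hsel, nonsing_inv_mul _ hdet]

/-- If the columns of `A` lie in the column space of `B`, then `A` factors through `B`. -/
lemma exists_eq_mul_of_span_le {m n : Type*} [Fintype n] (A B : Matrix m n ℂ)
    (h : Submodule.span ℂ (Set.range fun k : n => (fun i : m => A i k)) ≤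
      Submodule.span ℂ (Set.range fun k : n => (fun i : m => B i k))) :
    ∃ T : Matrix n n ℂ, A = B * T := by
  have hc : ∀ k, ∃ c : n → ℂ, ∑ j, c j • (fun i => B i j) = (fun i => A i k) := fun k =>
    (Submodule.mem_span_range_iff_exists_fun ℂ).1 (h (Submodule.subset_span ⟨k, rfl⟩))
  choose c hc using hc
  refine ⟨Matrix.of fun j k => c k j, ?_⟩
  ext i k
  have := congrFun (hc k) i
  simp only [Finset.sum_apply, Pi.smul_apply, smul_eq_mul] at this
  rw [← this, Matrix.mul_apply]
  exact Finset.sum_congr rfl fun j _ => mul_comm _ _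

/-- Rotational invariance underlying ESPRIT: if the column space of
`M : ℂ^{L×K}` (`L ≥ K + 1`) equals the column space of the Vandermonde matrix
`Z[i,k] = z_kⁱ` with `z_k` pairwise distinct and nonzero, then `M` with its
last row deleted (`M↑`) has rank `K`, there is a unique `Ψ` with
`M↓ = M↑ · Ψ` (where `M↓` is `M` with its first row deleted), and the
eigenvalue multiset of `Ψ` is exactly `{z₁, …, z_K}`. -/
theorem esprit_rotational_invariance
    (K L : ℕ) (hL : K + 1 ≤ L) (z : Fin K → ℂ)
    (hz : Function.Injective z) (hz0 : ∀ k, z k ≠ 0)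
    (M : Matrix (Fin L) (Fin K) ℂ)
    (hM : Submodule.span ℂ (Set.range fun k : Fin K => (fun i : Fin L => M i k)) =
          Submodule.span ℂ (Set.range fun k : Fin K => (fun i : Fin L => z k ^ (i : ℕ)))) :
    (Matrix.of fun (i : Fin (L - 1)) (k : Fin K) =>
        M ⟨(i : ℕ), by have := i.isLt; omega⟩ k).rank = K ∧
    (∃! Ψ : Matrix (Fin K) (Fin K) ℂ,
      (Matrix.of fun (i : Fin (L - 1)) (k : Fin K) =>
          M ⟨(i : ℕ) + 1, by have := i.isLt; omega⟩ k) =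
        (Matrix.of fun (i : Fin (L - 1)) (k : Fin K) =>
          M ⟨(i : ℕ), by have := i.isLt; omega⟩ k) * Ψ) ∧
    ∀ Ψ : Matrix (Fin K) (Fin K) ℂ,
      (Matrix.of fun (i : Fin (L - 1)) (k : Fin K) =>
          M ⟨(i : ℕ) + 1, by have := i.isLt; omega⟩ k) =
        (Matrix.of fun (i : Fin (L - 1)) (k : Fin K) =>
          M ⟨(i : ℕ), by have := i.isLt; omega⟩ k) * Ψ →
      Ψ.charpoly.roots = Multiset.map z Finset.univ.val := by
  obtain ⟨T, hT⟩ := exists_eq_mul_of_span_le M (Matrix.of fun i k => z k ^ (i : ℕ)) hM.le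
  obtain ⟨S, hS⟩ := exists_eq_mul_of_span_le (Matrix.of fun (i : Fin L) k => z k ^ (i : ℕ)) M hM.ge
  obtain ⟨W, hW⟩ := exists_leftInverse_vandermonde (n := L - 1) (by omega) z hz
  set Zu : Matrix (Fin (L - 1)) (Fin K) ℂ := Matrix.of fun i k => z k ^ (i : ℕ) with hZu
  set Mu : Matrix (Fin (L - 1)) (Fin K) ℂ := Matrix.of fun i k =>
    M ⟨(i : ℕ), by have := i.isLt; omega⟩ k with hMu
  set Md : Matrix (Fin (L - 1)) (Fin K) ℂ := Matrix.of fun i k =>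
    M ⟨(i : ℕ) + 1, by have := i.isLt; omega⟩ k with hMd
  have hMuT : Mu = Zu * T := by
    ext i k
    have := congrFun (congrFun hT ⟨(i : ℕ), by have := i.isLt; omega⟩) k
    simpa [hMu, hZu, Matrix.mul_apply] using this
  have hMuS : Zu = Mu * S := by
    ext i k
    have := congrFun (congrFun hS ⟨(i : ℕ), by have := i.isLt; omega⟩) k
    simpa [hMu, hZu, Matrix.mul_apply] using this
  have hMdT : Md = Zu * Matrix.diagonal z * T := by
    ext i k
    have := congrFun (congrFun hT ⟨(i : ℕ) + 1, by have := i.isLt; omega⟩) k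
    rw [Matrix.mul_apply] at this ⊢
    simpa [hMd, hZu, Matrix.mul_diagonal, pow_succ] using this
  have hTS : T * S = 1 := by
    calc T * S = W * Zu * (T * S) := by rw [hW, Matrix.one_mul]
      _ = W * (Zu * T * S) := by simp only [Matrix.mul_assoc]
      _ = 1 := by rw [← hMuT, ← hMuS, hW]
  have hST : S * T = 1 := mul_eq_one_comm.1 hTS
  have hleft : S * W * Mu = 1 := by
    calc S * W * Mu = S * (W * Zu) * T := by rw [hMuT]; simp only [Matrix.mul_assoc]
      _ = 1 := by rw [hW, Matrix.mul_one, hST]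
  have hsol : Md = Mu * (S * Matrix.diagonal z * T) := by
    rw [hMdT]
    conv_lhs => rw [hMuS]
    simp only [Matrix.mul_assoc]
  have huniq : ∀ Ψ : Matrix (Fin K) (Fin K) ℂ, Md = Mu * Ψ →
      Ψ = S * Matrix.diagonal z * T := by
    intro Ψ hΨ
    have h : S * W * (Mu * Ψ) = S * W * (Mu * (S * Matrix.diagonal z * T)) := by
      rw [← hΨ, ← hsol]
    rwa [← Matrix.mul_assoc, ← Matrix.mul_assoc (S * W) Mu, hleft, Matrix.one_mul,
      Matrix.one_mul] at h
  refine ⟨le_antisymm (by simpa using Mu.rank_le_width) ?_, ⟨_, hsol, huniq⟩, ?_⟩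
  · have h := Matrix.rank_mul_le_right (S * W) Mu
    rwa [hleft, Matrix.rank_one, Fintype.card_fin] at h
  · intro Ψ hΨ
    rw [huniq Ψ hΨ, Matrix.charpoly_mul_comm, ← Matrix.mul_assoc, hTS, Matrix.one_mul,
      Matrix.charpoly_diagonal]
    have h := Polynomial.roots_multiset_prod_X_sub_C (Multiset.map z Finset.univ.val)
    rwa [Multiset.map_map] at h
end

section
/- Fix L₁, L₂, K₁, K₂ ≥ 1 and consider matrices Z ∈ ℝ^{(L₁·L₂)×(K₁·K₂)} with rows indexed by pairs (i₁,i₂), 0 ≤ iⱼ ≤ Lⱼ−1, and columns indexed by pairs (k₁,k₂), 0 ≤ kⱼ ≤ Kⱼ−1. Let Π₁ be the map that, for each fixed outer index pair (i₂,k₂), replaces each entry Z[(i₁,i₂),(k₁,k₂)] by the mean of Z[(p,i₂),(q,k₂)] over all (p,q) with p + q = i₁ + k₁ (within-block diagonal averaging), and let Π₂ be the map that replaces each entry by the mean of Z[(i₁,p),(k₁,q)] over all (p,q) with p + q = i₂ + k₂ (between-block diagonal averaging). Then Π₁ and Π₂ commute, and Π₂ ∘ Π₁ = Π₁ ∘ Π₂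 is the orthogonal projection, with respect to the Frobenius inner product, onto the subspace of Hankel-block-Hankel matrices, i.e., matrices W for which W[(i₁,i₂),(k₁,k₂)] depends only on the pair (i₁ + k₁, i₂ + k₂). -/
/-!
Both operators average a function over the fibres of a map `f` on a finite set: `f (p, q) = p + q`
on the inner, respectively outer, index pairs. Averaging over fibres is self-adjoint
(`sum_fiberAvg_mul`) and fixes the functions that are constant on fibres. The two averagings act on
independent index pairs, so they commute by exchanging finite sums, and their composition depends
only on both antidiagonal sums. Orthogonality of the residual follows: both operators can be
moved onto the Hankel-block-Hankel matrix `W`, and both fix it.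
-/

/-- The Frobenius (trace) inner product on real matrices. -/
def frobInner {m n : Type*} [Fintype m] [Fintype n]
    (A B : Matrix m n ℝ) : ℝ :=
  ∑ i, ∑ j, A i j * B i j

/-- A matrix indexed by pairs is Hankel-block-Hankel if its entries depend only
on the pair `(i₁ + k₁, i₂ + k₂)`. -/
def IsHankelBlockHankel {L₁ L₂ K₁ K₂ : ℕ}
    (W : Matrix (Fin L₁ × Fin L₂) (Fin K₁ × Fin K₂) ℝ) : Prop :=
  ∀ (i i' : Fin L₁ × Fin L₂) (k k' : Fin K₁ × Fin K₂),
    (i.1 : ℕ) + (k.1 : ℕ) = (i'.1 : ℕ) + (k'.1 : ℕ) →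
    (i.2 : ℕ) + (k.2 : ℕ) = (i'.2 : ℕ) + (k'.2 : ℕ) →
    W i k = W i' k'

/-- Within-block diagonal averaging: averaging over the first (inner) index
pair along antidiagonals, for each fixed outer index pair. -/
noncomputable def diagAvgWithin {L₁ L₂ K₁ K₂ : ℕ}
    (Z : Matrix (Fin L₁ × Fin L₂) (Fin K₁ × Fin K₂) ℝ) :
    Matrix (Fin L₁ × Fin L₂) (Fin K₁ × Fin K₂) ℝ :=
  Matrix.of fun i k =>
    (∑ pq ∈ Finset.univ.filter
        (fun pq : Fin L₁ × Fin K₁ =>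
          (pq.1 : ℕ) + (pq.2 : ℕ) = (i.1 : ℕ) + (k.1 : ℕ)),
        Z (pq.1, i.2) (pq.2, k.2)) /
    ((Finset.univ.filter
        (fun pq : Fin L₁ × Fin K₁ =>
          (pq.1 : ℕ) + (pq.2 : ℕ) = (i.1 : ℕ) + (k.1 : ℕ))).card : ℝ)

/-- Between-block diagonal averaging: averaging over the second (outer) index
pair along antidiagonals, for each fixed inner index pair. -/
noncomputable def diagAvgBetween {L₁ L₂ K₁ K₂ : ℕ}
    (Z : Matrix (Fin L₁ × Fin L₂) (Fin K₁ × Fin K₂) ℝ) :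
    Matrix (Fin L₁ × Fin L₂) (Fin K₁ × Fin K₂) ℝ :=
  Matrix.of fun i k =>
    (∑ pq ∈ Finset.univ.filter
        (fun pq : Fin L₂ × Fin K₂ =>
          (pq.1 : ℕ) + (pq.2 : ℕ) = (i.2 : ℕ) + (k.2 : ℕ)),
        Z (i.1, pq.1) (k.1, pq.2)) /
    ((Finset.univ.filter
        (fun pq : Fin L₂ × Fin K₂ =>
          (pq.1 : ℕ) + (pq.2 : ℕ) = (i.2 : ℕ) + (k.2 : ℕ))).card : ℝ)

/-- The mean of `g` over the fibre of `f` through `x`. -/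
noncomputable def fiberAvg {X : Type*} [Fintype X] (f : X → ℕ) (g : X → ℝ) (x : X) : ℝ :=
  (∑ y ∈ Finset.univ.filter (fun y => f y = f x), g y) /
    ((Finset.univ.filter (fun y => f y = f x)).card : ℝ)

lemma fiberAvg_of_const {X : Type*} [Fintype X] (f : X → ℕ) (g : X → ℝ) (x : X)
    (h : ∀ y, f y = f x → g y = g x) : fiberAvg f g x = g x := by
  unfold fiberAvg
  have hcard : ((Finset.univ.filter (fun y => f y = f x)).card : ℝ) ≠ 0 := by
    have : x ∈ Finset.univ.filter (fun y => f y = f x) := by simp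
    exact_mod_cast Finset.card_ne_zero_of_mem this
  rw [Finset.sum_congr rfl (g := fun _ => g x)
    (fun y hy => h y (Finset.mem_filter.mp hy).2), Finset.sum_const, nsmul_eq_mul]
  field_simp

/-- Averaging over fibres is self-adjoint: its kernel `[f y = f x] / #fibre` is symmetric. -/
lemma sum_fiberAvg_mul {X : Type*} [Fintype X] (f : X → ℕ) (g h : X → ℝ) :
    ∑ x, fiberAvg f g x * h x = ∑ x, g x * fiberAvg f h x := by
  simp only [fiberAvg, Finset.sum_div, Finset.sum_mul, Finset.mul_sum, Finset.sum_filter]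
  rw [Finset.sum_comm]
  refine Finset.sum_congr rfl fun x _ => Finset.sum_congr rfl fun y _ => ?_
  by_cases hxy : f x = f y
  · simp only [hxy, if_true]
    ring
  · rw [if_neg hxy, if_neg (Ne.symm hxy), zero_div, zero_div, zero_mul, mul_zero]

section

variable {L₁ L₂ K₁ K₂ : ℕ}

lemma diagAvgWithin_apply (Z : Matrix (Fin L₁ × Fin L₂) (Fin K₁ × Fin K₂) ℝ)
    (i : Fin L₁ × Fin L₂) (k : Fin K₁ × Fin K₂) :
    diagAvgWithin Z i k =
      fiberAvg (fun pq : Fin L₁ × Fin K₁ => (pq.1 : ℕ) + (pq.2 : ℕ))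
        (fun pq => Z (pq.1, i.2) (pq.2, k.2)) (i.1, k.1) := rfl

lemma diagAvgBetween_apply (Z : Matrix (Fin L₁ × Fin L₂) (Fin K₁ × Fin K₂) ℝ)
    (i : Fin L₁ × Fin L₂) (k : Fin K₁ × Fin K₂) :
    diagAvgBetween Z i k =
      fiberAvg (fun pq : Fin L₂ × Fin K₂ => (pq.1 : ℕ) + (pq.2 : ℕ))
        (fun pq => Z (i.1, pq.1) (k.1, pq.2)) (i.2, k.2) := rfl

/-- The Frobenius inner product, summed over inner index pairs `a` and outer index pairs `b`. -/
lemma frobInner_eq_sum (A B : Matrix (Fin L₁ × Fin L₂) (Fin K₁ × Fin K₂) ℝ) :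
    frobInner A B = ∑ b : Fin L₂ × Fin K₂, ∑ a : Fin L₁ × Fin K₁,
      A (a.1, b.1) (a.2, b.2) * B (a.1, b.1) (a.2, b.2) := by
  unfold frobInner
  simp only [← Fintype.sum_prod_type']
  exact Fintype.sum_equiv
    ((Equiv.prodProdProdComm _ _ _ _).trans (Equiv.prodComm _ _)) _ _ fun _ => rfl

lemma frobInner_diagAvgWithin (A B : Matrix (Fin L₁ × Fin L₂) (Fin K₁ × Fin K₂) ℝ) :
    frobInner (diagAvgWithin A) B = frobInner A (diagAvgWithin B) := by
  rw [frobInner_eq_sum, frobInner_eq_sum]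
  exact Finset.sum_congr rfl fun b _ => sum_fiberAvg_mul
    (fun pq : Fin L₁ × Fin K₁ => (pq.1 : ℕ) + (pq.2 : ℕ))
    (fun pq => A (pq.1, b.1) (pq.2, b.2)) (fun pq => B (pq.1, b.1) (pq.2, b.2))

lemma frobInner_diagAvgBetween (A B : Matrix (Fin L₁ × Fin L₂) (Fin K₁ × Fin K₂) ℝ) :
    frobInner (diagAvgBetween A) B = frobInner A (diagAvgBetween B) := by
  rw [frobInner_eq_sum, frobInner_eq_sum, Finset.sum_comm]
  conv_rhs => rw [Finset.sum_comm]
  exact Finset.sum_congr rfl fun a _ => sum_fiberAvg_mul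
    (fun pq : Fin L₂ × Fin K₂ => (pq.1 : ℕ) + (pq.2 : ℕ))
    (fun pq => A (a.1, pq.1) (a.2, pq.2)) (fun pq => B (a.1, pq.1) (a.2, pq.2))

lemma IsHankelBlockHankel.diagAvgWithin_eq {W : Matrix (Fin L₁ × Fin L₂) (Fin K₁ × Fin K₂) ℝ}
    (hW : IsHankelBlockHankel W) : diagAvgWithin W = W := by
  ext i k
  rw [diagAvgWithin_apply, fiberAvg_of_const]
  exact fun y hy => hW _ _ _ _ hy rfl

lemma IsHankelBlockHankel.diagAvgBetween_eq {W : Matrix (Fin L₁ × Fin L₂) (Fin K₁ × Fin K₂) ℝ}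
    (hW : IsHankelBlockHankel W) : diagAvgBetween W = W := by
  ext i k
  rw [diagAvgBetween_apply, fiberAvg_of_const]
  exact fun y hy => hW _ _ _ _ rfl hy

lemma diagAvgBetween_diagAvgWithin_comm (Z : Matrix (Fin L₁ × Fin L₂) (Fin K₁ × Fin K₂) ℝ) :
    diagAvgBetween (diagAvgWithin Z) = diagAvgWithin (diagAvgBetween Z) := by
  ext i k
  simp only [diagAvgBetween, diagAvgWithin, Matrix.of_apply, ← Finset.sum_div]
  rw [Finset.sum_comm, div_right_comm]

lemma isHankelBlockHankel_diagAvg (Z : Matrix (Fin L₁ × Fin L₂) (Fin K₁ × Fin K₂) ℝ) :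
    IsHankelBlockHankel (diagAvgBetween (diagAvgWithin Z)) := by
  intro i i' k k' h1 h2
  simp only [diagAvgBetween, diagAvgWithin, Matrix.of_apply, h1, h2]

end

/-- The two diagonal-averaging operators commute, and their composition is the
orthogonal projection (w.r.t. the Frobenius inner product) onto the subspace of
Hankel-block-Hankel matrices: it maps into that subspace, fixes it, and its
residual is orthogonal to every Hankel-block-Hankel matrix. -/
theorem two_step_diag_averaging_is_orthogonal_projection
    (L₁ L₂ K₁ K₂ : ℕ) (hL₁ : 1 ≤ L₁) (hL₂ : 1 ≤ L₂) (hK₁ : 1 ≤ K₁) (hK₂ : 1 ≤ K₂) :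
    (diagAvgBetween (L₁ := L₁) (L₂ := L₂) (K₁ := K₁) (K₂ := K₂) ∘ diagAvgWithin =
      diagAvgWithin ∘ diagAvgBetween) ∧
    (∀ Z : Matrix (Fin L₁ × Fin L₂) (Fin K₁ × Fin K₂) ℝ,
      IsHankelBlockHankel (diagAvgBetween (diagAvgWithin Z))) ∧
    (∀ W : Matrix (Fin L₁ × Fin L₂) (Fin K₁ × Fin K₂) ℝ,
      IsHankelBlockHankel W → diagAvgBetween (diagAvgWithin W) = W) ∧
    (∀ (Z W : Matrix (Fin L₁ × Fin L₂) (Fin K₁ × Fin K₂) ℝ),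
      IsHankelBlockHankel W →
        frobInner (Z - diagAvgBetween (diagAvgWithin Z)) W = 0) := by
  refine ⟨funext diagAvgBetween_diagAvgWithin_comm, isHankelBlockHankel_diagAvg, ?_, ?_⟩
  · intro W hW
    rw [hW.diagAvgWithin_eq, hW.diagAvgBetween_eq]
  · intro Z W hW
    have hadj : frobInner (diagAvgBetween (diagAvgWithin Z)) W = frobInner Z W := by
      rw [frobInner_diagAvgBetween, hW.diagAvgBetween_eq, frobInner_diagAvgWithin,
        hW.diagAvgWithin_eq]
    have hsub : frobInner (Z - diagAvgBetween (diagAvgWithin Z)) W =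
        frobInner Z W - frobInner (diagAvgBetween (diagAvgWithin Z)) W := by
      simp only [frobInner, Matrix.sub_apply, sub_mul, Finset.sum_sub_distrib]
    rw [hsub, hadj, sub_self]
end

section
/- Let x : ℕ × ℕ → ℝ be given by x(n,m) = ρ₁^n · ρ₂^m · cos(2π(ω₁ n + ω₂ m) + φ) with ρ₁, ρ₂ > 0 and ω₁, ω₂, φ ∈ ℝ. Then for all array sizes (N₁, N₂) and all window sizes (L₁, L₂) with 1 ≤ Lᵢ ≤ Nᵢ, the Hankel-block-Hankel trajectory matrix of x has rank at most 2. -/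
/-- A single damped 2D sinusoid
`x(n,m) = ρ₁ⁿ · ρ₂ᵐ · cos(2π(ω₁ n + ω₂ m) + φ)` with `ρ₁, ρ₂ > 0`
has all trajectory matrices of rank at most 2. -/
theorem damped_2d_sinusoid_trajectory_rank_le_two
    (ρ₁ ρ₂ ω₁ ω₂ φ : ℝ) (hρ₁ : 0 < ρ₁) (hρ₂ : 0 < ρ₂)
    (x : ℕ × ℕ → ℝ)
    (hx : ∀ n m : ℕ, x (n, m) =
      ρ₁ ^ n * ρ₂ ^ m * Real.cos (2 * Real.pi * (ω₁ * n + ω₂ * m) + φ)) :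
    ∀ N₁ N₂ L₁ L₂ : ℕ, 1 ≤ L₁ → L₁ ≤ N₁ → 1 ≤ L₂ → L₂ ≤ N₂ →
      (trajectoryMatrix2D x L₁ L₂ (N₁ - L₁ + 1) (N₂ - L₂ + 1)).rank ≤ 2 := by
  intro N₁ N₂ L₁ L₂ _ _ _ _
  let A : Matrix (Fin L₁ × Fin L₂) (Fin 2) ℝ := Matrix.of fun i =>
    ![ρ₁ ^ (i.1 : ℕ) * ρ₂ ^ (i.2 : ℕ) * Real.cos (2 * Real.pi * (ω₁ * (i.1 : ℕ) + ω₂ * (i.2 : ℕ))),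
      ρ₁ ^ (i.1 : ℕ) * ρ₂ ^ (i.2 : ℕ) * Real.sin (2 * Real.pi * (ω₁ * (i.1 : ℕ) + ω₂ * (i.2 : ℕ)))]
  let B : Matrix (Fin 2) (Fin (N₁ - L₁ + 1) × Fin (N₂ - L₂ + 1)) ℝ := Matrix.of fun j k =>
    ![ρ₁ ^ (k.1 : ℕ) * ρ₂ ^ (k.2 : ℕ) *
        Real.cos (2 * Real.pi * (ω₁ * (k.1 : ℕ) + ω₂ * (k.2 : ℕ)) + φ),
      -(ρ₁ ^ (k.1 : ℕ) * ρ₂ ^ (k.2 : ℕ) *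
        Real.sin (2 * Real.pi * (ω₁ * (k.1 : ℕ) + ω₂ * (k.2 : ℕ)) + φ))] j
  have factorization : trajectoryMatrix2D x L₁ L₂ (N₁ - L₁ + 1) (N₂ - L₂ + 1) = A * B := by
    ext i k
    have phase_split : 2 * Real.pi * (ω₁ * (((i.1 : ℕ) + (k.1 : ℕ) : ℕ) : ℝ)
          + ω₂ * (((i.2 : ℕ) + (k.2 : ℕ) : ℕ) : ℝ)) + φ
        = 2 * Real.pi * (ω₁ * (i.1 : ℕ) + ω₂ * (i.2 : ℕ))
          + (2 * Real.pi * (ω₁ * (k.1 : ℕ) + ω₂ * (k.2 : ℕ)) + φ) := by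
      push_cast
      ring
    simp only [trajectoryMatrix2D, Matrix.of_apply, hx, Matrix.mul_apply, Fin.sum_univ_two, A, B,
      Matrix.cons_val_zero, Matrix.cons_val_one]
    rw [phase_split, Real.cos_add, pow_add, pow_add]
    ring
  rw [factorization]
  exact (Matrix.rank_mul_le_left A B).trans (A.rank_le_card_width.trans_eq (Fintype.card_fin 2))
end
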